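/- arXiv:2506.06530 — 3 statements merged into one kernel-verified Lean document; each statement's English description precedes it below -/
import Mathlib

section
/- Let X be a random variable with values in a measurable space, let M be a measurable map into ℝ^d such that M(X) has finite second moments, mean μ_M and covariance matrix Σ_M, and let B ~ N(0, Σ_B) be a d-dimensional Gaussian vector with positive definite covariance Σ_B, independent of X. Set Z = M(X) + B, μ_Z = μ_M and Σ_Z = Σ_M + Σ_B. Then (1/2)·log det(I_d + Σ_M Σ_B^{-1}) − MI(X; Z) = D_KL(Law(Z) ‖ N(μ_Z, Σ_Z)); in particular this difference is nonnegative, and it equals 0 if and only if Law(Z) is the Gaussian distribution N(μ_Z, Σ_Z). -/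
/-!
Let `g` be the density of `N(0, S_B)`. By independence, `(X, Z)` has density `g (z - M x)` with
respect to `Law(X) ⊗ Lebesgue` (`map_joint_eq`), and `Z` has the mixture density
`q z = E[g (z - M X)]` with respect to Lebesgue measure (`map_sum_eq`, `mixDensity`). Hence, with
`φ` the density of `N(μ_M, S_M + S_B)`,

  `MI(X; Z) = E[log g(B)] - E[log q(Z)]` and
  `D_KL(Law Z ‖ N(μ_M, S_M + S_B)) = E[log q(Z)] - E[log φ(Z)]`.

The terms in `q` cancel in the sum, provided `log q(Z)` is integrable: it is bounded above because
`g` is bounded, and below by a quadratic function of `Z` by Jensen's inequality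
(`exp_le_mixDensity`, `integrable_log_mixDensity`). The remaining two expectations only involve
second moments: the covariance of `Z` is `S_M + S_B` (`integral_centred_add_mul`), so both expected
quadratic forms equal `d` (`integral_quad`), and what is left is
`(1/2) (log det (S_M + S_B) - log det S_B)`.

The moments and the normalisation of `N(μ, S)` come from writing it as the image of the standard
Gaussian under `y ↦ L y + μ`, where `S = L Lᵀ` (`mvGaussian_eq_map`). Nonnegativity and the equality
case of the divergence are those of Mathlib's `InformationTheory.klDiv`, with which `klDivM` agrees
on probability measures (`klDivM_eq_klDiv`).
-/

open MeasureTheory Matrix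

/-- The multivariate Gaussian measure `N(μ, S)` on `ℝ^d`, given by its density with
respect to Lebesgue measure. -/
noncomputable def mvGaussian {d : ℕ} (μ : Fin d → ℝ) (S : Matrix (Fin d) (Fin d) ℝ) :
    Measure (Fin d → ℝ) :=
  volume.withDensity fun x =>
    ENNReal.ofReal (Real.sqrt (((2 * Real.pi) ^ d * S.det)⁻¹) *
      Real.exp (-(1 / 2 : ℝ) * ((x - μ) ⬝ᵥ S⁻¹.mulVec (x - μ))))

-- Kullback–Leibler divergence between two measures, valued in `EReal`
-- (`⊤` when `μ` is not absolutely continuous w.r.t. `ν` or the log-likelihood ratio is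
-- not integrable).
open scoped Classical in
noncomputable def klDivM {α : Type*} [MeasurableSpace α] (μ ν : Measure α) : EReal :=
  if μ ≪ ν ∧ Integrable (llr μ ν) μ then ((∫ x, llr μ ν x ∂μ : ℝ) : EReal) else ⊤

/-- Mutual information `MI(U;W) = D_KL(Law(U,W) ‖ Law(U) ⊗ Law(W))`. -/
noncomputable def mutualInfo {Ω 𝓧 𝓨 : Type*} [MeasurableSpace Ω] [MeasurableSpace 𝓧]
    [MeasurableSpace 𝓨] (P : Measure Ω) (U : Ω → 𝓧) (W : Ω → 𝓨) : EReal :=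
  klDivM (P.map fun ω => (U ω, W ω)) ((P.map U).prod (P.map W))

/-- Mean vector of a vector-valued random variable. -/
noncomputable def vecMean {Ω : Type*} [MeasurableSpace Ω] (P : Measure Ω) {d : ℕ}
    (f : Ω → Fin d → ℝ) : Fin d → ℝ :=
  fun i => ∫ ω, f ω i ∂P

/-- Covariance matrix of a vector-valued random variable. -/
noncomputable def vecCov {Ω : Type*} [MeasurableSpace Ω] (P : Measure Ω) {d : ℕ}
    (f : Ω → Fin d → ℝ) : Matrix (Fin d) (Fin d) ℝ :=
  Matrix.of fun i j =>
    ∫ ω, (f ω i - vecMean P f i) * (f ω j - vecMean P f j) ∂P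

open ProbabilityTheory

/-! ### The multivariate Gaussian as an affine image of the standard one -/

/-- The standard Gaussian on `ℝ^d`, as a product of one-dimensional ones. -/
noncomputable abbrev stdG (d : ℕ) : Measure (Fin d → ℝ) :=
  Measure.pi fun _ => gaussianReal 0 1

/-- The product density is integrated over boxes, which determine the product measure. -/
lemma stdG_eq_withDensity (d : ℕ) :
    stdG d = volume.withDensity fun y : Fin d → ℝ =>
      ENNReal.ofReal (∏ i, gaussianPDFReal 0 1 (y i)) := by
  refine Measure.pi_eq fun s hs => ?_
  have hint : ∀ i, Integrable ((s i).indicator (gaussianPDFReal 0 1)) volume := fun i =>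
    (integrable_gaussianPDFReal 0 1).indicator (hs i)
  have hnn : ∀ i x, 0 ≤ (s i).indicator (gaussianPDFReal 0 1) x := fun i x =>
    Set.indicator_nonneg (fun x _ => gaussianPDFReal_nonneg 0 1 x) x
  have h1 : ∀ i, gaussianReal 0 1 (s i)
      = ENNReal.ofReal (∫ x, (s i).indicator (gaussianPDFReal 0 1) x) := fun i => by
    rw [gaussianReal_apply_eq_integral _ one_ne_zero, integral_indicator (hs i)]
  simp_rw [h1]
  rw [← ENNReal.ofReal_prod_of_nonneg fun i _ => integral_nonneg (hnn i),
    ← integral_fintype_prod_volume_eq_prod, withDensity_apply _ (MeasurableSet.univ_pi hs),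
    ← lintegral_indicator (MeasurableSet.univ_pi hs),
    ofReal_integral_eq_lintegral_ofReal (μ := volume)
      (f := fun y : Fin d → ℝ => ∏ i, (s i).indicator (gaussianPDFReal 0 1) (y i))
      (Integrable.fintype_prod hint) (Filter.Eventually.of_forall fun y => Finset.prod_nonneg fun i _ => hnn i _)]
  refine lintegral_congr fun y => ?_
  by_cases hy : y ∈ Set.univ.pi s
  · rw [Set.indicator_of_mem hy]
    congr 1
    exact Finset.prod_congr rfl fun i _ => (Set.indicator_of_mem (hy i trivial) _).symm
  · rw [Set.indicator_of_notMem hy]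
    simp only [Set.mem_pi, not_forall] at hy
    obtain ⟨i, -, hi⟩ := hy
    rw [Finset.prod_eq_zero (Finset.mem_univ i) (Set.indicator_of_notMem hi _),
      ENNReal.ofReal_zero]

open scoped MatrixOrder in
lemma exists_mul_transpose_of_posDef {d : ℕ} {S : Matrix (Fin d) (Fin d) ℝ} (hS : S.PosDef) :
    ∃ L : Matrix (Fin d) (Fin d) ℝ, S = L * Lᵀ ∧ L.det ≠ 0 := by
  obtain ⟨A, hA⟩ := CStarAlgebra.nonneg_iff_eq_star_mul_self.mp hS.posSemidef.nonneg
  have h : S = Aᵀ * Aᵀᵀ := by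
    rw [hA, star_eq_conjTranspose, conjTranspose_eq_transpose_of_trivial, transpose_transpose]
  refine ⟨Aᵀ, h, fun h0 => hS.det_pos.ne' ?_⟩
  rw [h, det_mul, h0, zero_mul]

/-- The real-valued Lebesgue density of `N(μ, S)`, meaningful when `S` is positive definite. -/
noncomputable def gpdf {d : ℕ} (μ : Fin d → ℝ) (S : Matrix (Fin d) (Fin d) ℝ)
    (x : Fin d → ℝ) : ℝ :=
  Real.sqrt (((2 * Real.pi) ^ d * S.det)⁻¹) *
      Real.exp (-(1 / 2 : ℝ) * ((x - μ) ⬝ᵥ S⁻¹.mulVec (x - μ)))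

lemma mvGaussian_eq {d : ℕ} (μ : Fin d → ℝ) (S : Matrix (Fin d) (Fin d) ℝ) :
    mvGaussian μ S = volume.withDensity fun x => ENNReal.ofReal (gpdf μ S x) := rfl

lemma continuous_gpdf {d : ℕ} (μ : Fin d → ℝ) (S : Matrix (Fin d) (Fin d) ℝ) :
    Continuous (gpdf μ S) := by
  unfold gpdf
  simp only [dotProduct, mulVec]
  fun_prop

lemma gpdf_pos {d : ℕ} (μ : Fin d → ℝ) {S : Matrix (Fin d) (Fin d) ℝ} (hS : S.PosDef)
    (x : Fin d → ℝ) : 0 < gpdf μ S x := by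
  have := hS.det_pos
  unfold gpdf
  positivity

lemma log_gpdf {d : ℕ} (μ : Fin d → ℝ) {S : Matrix (Fin d) (Fin d) ℝ} (hS : S.PosDef)
    (x : Fin d → ℝ) : Real.log (gpdf μ S x) =
      -(1 / 2) * Real.log ((2 * Real.pi) ^ d) - (1 / 2) * Real.log S.det
        - (1 / 2) * ((x - μ) ⬝ᵥ S⁻¹.mulVec (x - μ)) := by
  have := hS.det_pos
  unfold gpdf
  rw [Real.log_mul (by positivity) (by positivity), Real.log_exp, Real.log_sqrt (by positivity),
    Real.log_inv, Real.log_mul (by positivity) (by positivity)]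
  ring

/-- The change of variables `x = L y + μ` turns the density of `N(μ, L Lᵀ)` into the standard one,
the Jacobian `|det L|` absorbing the factor `(det S)^(-1/2)`. -/
lemma gpdf_affine {d : ℕ} (μ : Fin d → ℝ) {S L : Matrix (Fin d) (Fin d) ℝ}
    (hL : S = L * Lᵀ) (hdet : L.det ≠ 0) (y : Fin d → ℝ) :
    |L.det| * gpdf μ S (L.mulVec y + μ) = ∏ i, gaussianPDFReal 0 1 (y i) := by
  have hu : IsUnit L.det := isUnit_iff_ne_zero.2 hdet
  have hq : (L.mulVec y) ⬝ᵥ S⁻¹.mulVec (L.mulVec y) = ∑ i, y i ^ 2 := by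
    rw [hL, Matrix.mul_inv_rev, ← mulVec_mulVec, mulVec_mulVec y L⁻¹ L, nonsing_inv_mul _ hu,
      one_mulVec, ← vecMul_transpose, ← dotProduct_mulVec, mulVec_mulVec,
      mul_nonsing_inv _ (by rwa [det_transpose]), one_mulVec]
    simp [dotProduct, sq]
  have hc : |L.det| * Real.sqrt (((2 * Real.pi) ^ d * S.det)⁻¹)
      = (Real.sqrt (2 * Real.pi))⁻¹ ^ d := by
    rw [hL, det_mul, det_transpose, ← sq, Real.sqrt_inv, Real.sqrt_mul (by positivity),
      Real.sqrt_sq_eq_abs, mul_inv, mul_left_comm, mul_inv_cancel₀ (abs_ne_zero.2 hdet), mul_one,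
      inv_pow]
    congr 1
    rw [Real.sqrt_eq_iff_mul_self_eq (by positivity) (by positivity), ← mul_pow,
      Real.mul_self_sqrt (by positivity)]
  unfold gpdf
  rw [add_sub_cancel_right, hq, ← mul_assoc, hc]
  simp only [gaussianPDFReal, Finset.prod_mul_distrib, ← Real.exp_sum]
  simp only [NNReal.coe_one, mul_one, Finset.prod_const, Finset.card_univ, Fintype.card_fin,
    sub_zero]
  congr 2
  rw [Finset.mul_sum]
  exact Finset.sum_congr rfl fun i _ => by ring

/-- Change of variables `x = L y + μ` in a Lebesgue integral. -/
lemma lintegral_affine {d : ℕ} (μ : Fin d → ℝ) {L : Matrix (Fin d) (Fin d) ℝ}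
    (hdet : L.det ≠ 0) {f : (Fin d → ℝ) → ENNReal} (hf : Measurable f) :
    ∫⁻ x, f x = ∫⁻ y, ENNReal.ofReal |L.det| * f (L.mulVec y + μ) := by
  have hm : Measurable (toLin' L) := (LinearMap.continuous_on_pi _).measurable
  rw [lintegral_const_mul']
  · have h := lintegral_map (μ := volume) (hf.comp (measurable_add_const μ)) hm
    rw [Real.map_matrix_volume_pi_eq_smul_volume_pi hdet, lintegral_smul_measure] at h
    simp only [Function.comp_apply, toLin'_apply] at h
    rw [← h, lintegral_add_right_eq_self f μ, smul_eq_mul, ← mul_assoc,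
      ← ENNReal.ofReal_mul (abs_nonneg _), ← abs_mul, mul_inv_cancel₀ hdet, abs_one,
      ENNReal.ofReal_one, one_mul]
  · exact ENNReal.ofReal_ne_top

lemma measurable_affine {d : ℕ} (μ : Fin d → ℝ) (L : Matrix (Fin d) (Fin d) ℝ) :
    Measurable fun y => L.mulVec y + μ := by
  have hm : Measurable (toLin' L) := (LinearMap.continuous_on_pi _).measurable
  exact hm.add_const μ

lemma mvGaussian_eq_map {d : ℕ} (μ : Fin d → ℝ) {S L : Matrix (Fin d) (Fin d) ℝ}
    (hL : S = L * Lᵀ) (hdet : L.det ≠ 0) :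
    mvGaussian μ S = (stdG d).map fun y => L.mulVec y + μ := by
  have ha := measurable_affine μ L
  have hgm : Measurable fun x => ENNReal.ofReal (gpdf μ S x) :=
    (continuous_gpdf μ S).measurable.ennreal_ofReal
  ext s hs
  rw [Measure.map_apply ha hs, stdG_eq_withDensity, withDensity_apply _ (ha hs), mvGaussian_eq,
    withDensity_apply _ hs, ← lintegral_indicator hs, ← lintegral_indicator (ha hs),
    lintegral_affine μ hdet (hgm.indicator hs)]
  refine lintegral_congr fun y => ?_
  by_cases hy : L.mulVec y + μ ∈ s
  · rw [Set.indicator_of_mem hy, Set.indicator_of_mem (show y ∈ (fun y => L.mulVec y + μ) ⁻¹' s from hy),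
      ← ENNReal.ofReal_mul (abs_nonneg _), gpdf_affine μ hL hdet]
  · rw [Set.indicator_of_notMem hy, Set.indicator_of_notMem (show y ∉ (fun y => L.mulVec y + μ) ⁻¹' s from hy), mul_zero]

lemma isProbabilityMeasure_mvGaussian {d : ℕ} (μ : Fin d → ℝ) {S : Matrix (Fin d) (Fin d) ℝ}
    (hS : S.PosDef) : IsProbabilityMeasure (mvGaussian μ S) := by
  obtain ⟨L, hL, hdet⟩ := exists_mul_transpose_of_posDef hS
  rw [mvGaussian_eq_map μ hL hdet]
  exact Measure.isProbabilityMeasure_map (measurable_affine μ L).aemeasurable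

lemma memLp_stdG {d : ℕ} (k : Fin d) : MemLp (fun y : Fin d → ℝ => y k) 2 (stdG d) :=
  (memLp_id_gaussianReal' (μ := 0) (v := 1) 2 (by simp)).comp_measurePreserving
    (measurePreserving_eval (fun _ : Fin d => gaussianReal 0 1) k)

lemma integral_stdG {d : ℕ} (k : Fin d) : ∫ y, y k ∂(stdG d) = 0 := by
  have := integral_comp_eval (μ := fun _ : Fin d => gaussianReal 0 1) (i := k) (f := fun x => x)
    aestronglyMeasurable_id
  rw [this, integral_id_gaussianReal]

lemma integral_stdG_mul {d : ℕ} (k l : Fin d) :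
    ∫ y, y k * y l ∂(stdG d) = (1 : Matrix (Fin d) (Fin d) ℝ) k l := by
  by_cases h : k = l
  · subst h
    rw [one_apply_eq]
    have := integral_comp_eval (μ := fun _ : Fin d => gaussianReal 0 1) (i := k)
      (f := fun x => x * x) (by fun_prop)
    rw [this]
    have hv := variance_eq_sub (memLp_id_gaussianReal' (μ := 0) (v := 1) 2 (by simp))
    rw [variance_id_gaussianReal] at hv
    simp only [id_eq, integral_id_gaussianReal, Pi.pow_apply] at hv
    simpa [sq] using hv.symm
  · rw [one_apply_ne h]
    have hi : iIndepFun (fun i (y : Fin d → ℝ) => y i) (stdG d) :=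
      iIndepFun_pi (X := fun _ x => x) fun _ => aemeasurable_id
    have := (hi.indepFun h).integral_fun_mul_eq_mul_integral
      (memLp_stdG k).aestronglyMeasurable (memLp_stdG l).aestronglyMeasurable
    rw [this, integral_stdG, zero_mul]

/-! ### First and second moments of the centred Gaussian -/

section moments
variable {d : ℕ} {S : Matrix (Fin d) (Fin d) ℝ}

lemma memLp_mvGaussian (hS : S.PosDef) (i : Fin d) :
    MemLp (fun x : Fin d → ℝ => x i) 2 (mvGaussian 0 S) := by
  obtain ⟨L, hL, hdet⟩ := exists_mul_transpose_of_posDef hS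
  rw [mvGaussian_eq_map 0 hL hdet, memLp_map_measure_iff (measurable_pi_apply i).aestronglyMeasurable
    (measurable_affine 0 L).aemeasurable]
  simp only [Function.comp_def, add_zero, mulVec, dotProduct]
  exact memLp_finsetSum _ fun k _ => (memLp_stdG k).const_mul _

lemma integral_mvGaussian (hS : S.PosDef) (i : Fin d) :
    ∫ x, x i ∂(mvGaussian 0 S) = 0 := by
  obtain ⟨L, hL, hdet⟩ := exists_mul_transpose_of_posDef hS
  rw [mvGaussian_eq_map 0 hL hdet, integral_map (measurable_affine 0 L).aemeasurable
    (measurable_pi_apply i).aestronglyMeasurable]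
  simp only [add_zero, mulVec, dotProduct]
  rw [integral_finsetSum _ fun k _ => ((memLp_stdG k).integrable one_le_two).const_mul _]
  simp [integral_const_mul, integral_stdG]

lemma integral_mvGaussian_mul (hS : S.PosDef) (i j : Fin d) :
    ∫ x, x i * x j ∂(mvGaussian 0 S) = S i j := by
  obtain ⟨L, hL, hdet⟩ := exists_mul_transpose_of_posDef hS
  have hint : ∀ k l, Integrable (fun y : Fin d → ℝ => L i k * y k * (L j l * y l)) (stdG d) :=
    fun k l => ((memLp_stdG k).const_mul _).integrable_mul ((memLp_stdG l).const_mul _)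
  rw [mvGaussian_eq_map 0 hL hdet, integral_map (measurable_affine 0 L).aemeasurable
    (by fun_prop)]
  simp only [add_zero, mulVec, dotProduct, Finset.sum_mul_sum]
  rw [integral_finsetSum _ fun k _ => integrable_finsetSum _ fun l _ => hint k l]
  simp_rw [integral_finsetSum _ fun l _ => hint _ l]
  have : ∀ k l, ∫ y : Fin d → ℝ, L i k * y k * (L j l * y l) ∂(stdG d)
      = L i k * L j l * (1 : Matrix (Fin d) (Fin d) ℝ) k l := fun k l => by
    rw [← integral_stdG_mul, ← integral_const_mul]
    exact integral_congr_ae (Filter.Eventually.of_forall fun y => by ring)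
  simp_rw [this, hL]
  simp [Matrix.mul_apply, Matrix.one_apply]

end moments

/-! ### Divergence of a law given by a density -/

section kl
variable {Ω α : Type*} [MeasurableSpace Ω] [MeasurableSpace α]

/-- If the law of `T` has density `f` with respect to `ν`, then its divergence from `ν` is
`E[log f(T)]`. -/
lemma klDivM_map_of_withDensity {P : Measure Ω} {T : Ω → α}
    (hT : Measurable T) {ν : Measure α} [SigmaFinite ν] {f : α → ENNReal} (hf : Measurable f)
    (h : P.map T = ν.withDensity f)
    (hint : Integrable (fun ω => Real.log (f (T ω)).toReal) P) :
    klDivM (P.map T) ν = ((∫ ω, Real.log (f (T ω)).toReal ∂P : ℝ) : EReal) := by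
  have hac : P.map T ≪ ν := h ▸ withDensity_absolutelyContinuous ν f
  have hlog : Measurable fun a => Real.log (f a).toReal := by fun_prop
  have hllr : llr (P.map T) ν =ᵐ[P.map T] fun a => Real.log (f a).toReal := by
    have h1 : (P.map T).rnDeriv ν =ᵐ[ν] f := h ▸ Measure.rnDeriv_withDensity ν hf
    filter_upwards [hac.ae_le h1] with a ha
    simp only [llr, ha]
  have hint' : Integrable (llr (P.map T) ν) (P.map T) := by
    rw [integrable_congr hllr, integrable_map_measure hlog.aestronglyMeasurable hT.aemeasurable]
    exact hint
  rw [klDivM, if_pos ⟨hac, hint'⟩, integral_congr_ae hllr,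
    integral_map hT.aemeasurable hlog.aestronglyMeasurable]

lemma withDensity_withDensity_div {ν : Measure α} {f g : α → ENNReal} (hf : Measurable f)
    (hg : Measurable g) (hf0 : ∀ x, f x ≠ 0) (hft : ∀ x, f x ≠ ⊤) :
    (ν.withDensity f).withDensity (fun x => g x / f x) = ν.withDensity g := by
  have hm : Measurable fun x => g x / f x := hg.div hf
  rw [← withDensity_mul _ hf hm]
  congr 1
  funext x
  exact ENNReal.mul_div_cancel (hf0 x) (hft x)

/-- For probability measures the mass correction in Mathlib's `klDiv` vanishes. -/
lemma klDivM_eq_klDiv (μ ν : Measure α) [IsProbabilityMeasure μ] [IsProbabilityMeasure ν] :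
    klDivM μ ν = (InformationTheory.klDiv μ ν : EReal) := by
  unfold klDivM
  split_ifs with h
  · rw [← EReal.coe_ennreal_toReal (InformationTheory.klDiv_ne_top h.1 h.2),
      InformationTheory.toReal_klDiv_of_measure_eq h.1 (by simp)]
  · rw [(InformationTheory.klDiv_eq_top_iff).2 fun h1 h2 => h ⟨h1, h2⟩, EReal.coe_ennreal_top]

end kl

/-! ### Joint and marginal densities of signal plus independent noise -/

section densities
variable {Ω 𝓧 : Type*} [MeasurableSpace Ω] [MeasurableSpace 𝓧] {P : Measure Ω}
  [IsProbabilityMeasure P] {d : ℕ} {X : Ω → 𝓧} {M : 𝓧 → Fin d → ℝ} {B : Ω → Fin d → ℝ}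
  {g : (Fin d → ℝ) → ENNReal}

lemma map_joint_eq (hX : Measurable X) (hM : Measurable M) (hB : Measurable B)
    (hg : Measurable g) (hBlaw : P.map B = volume.withDensity g) (hindep : IndepFun X B P) :
    P.map (fun ω => (X ω, M (X ω) + B ω)) =
      ((P.map X).prod volume).withDensity fun p => g (p.2 - M p.1) := by
  have := Measure.isProbabilityMeasure_map (μ := P) hX.aemeasurable
  have := Measure.isProbabilityMeasure_map (μ := P) hB.aemeasurable
  have hsh : Measurable fun p : 𝓧 × (Fin d → ℝ) => (p.1, M p.1 + p.2) := by fun_prop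
  have hd : Measurable fun p : 𝓧 × (Fin d → ℝ) => g (p.2 - M p.1) := by fun_prop
  have h1 : P.map (fun ω => (X ω, M (X ω) + B ω)) =
      ((P.map X).prod (P.map B)).map fun p => (p.1, M p.1 + p.2) := by
    rw [← (indepFun_iff_map_prod_eq_prod_map_map hX.aemeasurable hB.aemeasurable).1 hindep,
      Measure.map_map hsh (hX.prodMk hB)]
    rfl
  refine Measure.ext_of_lintegral _ fun φ hφ => ?_
  have hφs : Measurable fun p : 𝓧 × (Fin d → ℝ) => φ (p.1, M p.1 + p.2) := hφ.comp hsh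
  rw [h1, lintegral_map hφ hsh, lintegral_prod _ hφs.aemeasurable,
    lintegral_withDensity_eq_lintegral_mul _ hd hφ,
    lintegral_prod _ (hd.mul hφ).aemeasurable]
  refine lintegral_congr fun x => ?_
  rw [hBlaw, lintegral_withDensity_eq_lintegral_mul _ hg (by fun_prop)]
  simp only [Pi.mul_apply]
  rw [← lintegral_sub_right_eq_self (fun b => g b * φ (x, M x + b)) (M x)]
  simp only [add_sub_cancel]

lemma map_sum_eq (hX : Measurable X) (hM : Measurable M) (hB : Measurable B)
    (hg : Measurable g) (hBlaw : P.map B = volume.withDensity g) (hindep : IndepFun X B P) :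
    P.map (fun ω => M (X ω) + B ω) =
      volume.withDensity fun z => ∫⁻ ω, g (z - M (X ω)) ∂P := by
  have := Measure.isProbabilityMeasure_map (μ := P) hX.aemeasurable
  have hd : Measurable fun p : 𝓧 × (Fin d → ℝ) => g (p.2 - M p.1) := by fun_prop
  have hd' : Measurable fun p : (Fin d → ℝ) × 𝓧 => g (p.1 - M p.2) := by fun_prop
  have h1 : P.map (fun ω => M (X ω) + B ω)
      = (P.map (fun ω => (X ω, M (X ω) + B ω))).map Prod.snd := by
    rw [Measure.map_map measurable_snd (by fun_prop)]
    rfl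
  have h2 : (fun z => ∫⁻ ω, g (z - M (X ω)) ∂P) = fun z => ∫⁻ x, g (z - M x) ∂(P.map X) := by
    funext z
    rw [lintegral_map (by fun_prop) hX]
  rw [h1, map_joint_eq hX hM hB hg hBlaw hindep, h2]
  refine Measure.ext_of_lintegral _ fun φ hφ => ?_
  rw [lintegral_map hφ measurable_snd, lintegral_withDensity_eq_lintegral_mul _ hd (by fun_prop),
    lintegral_withDensity_eq_lintegral_mul _ hd'.lintegral_prod_right' hφ,
    lintegral_prod_symm _ (hd.mul (by fun_prop)).aemeasurable]
  refine lintegral_congr fun z => ?_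
  simp only [Pi.mul_apply]
  rw [lintegral_mul_const _ (by fun_prop)]

end densities

/-! ### Quadratic forms and their expectations -/

section quad
variable {d : ℕ}

lemma quad_nonneg {S : Matrix (Fin d) (Fin d) ℝ} (hS : S.PosDef) (x : Fin d → ℝ) :
    0 ≤ x ⬝ᵥ S⁻¹.mulVec x := by
  simpa using hS.inv.posSemidef.dotProduct_mulVec_nonneg x

lemma quad_sub_le {S : Matrix (Fin d) (Fin d) ℝ} (hS : S.PosDef) (x y : Fin d → ℝ) :
    (x - y) ⬝ᵥ S⁻¹.mulVec (x - y) ≤ 2 * (x ⬝ᵥ S⁻¹.mulVec x) + 2 * (y ⬝ᵥ S⁻¹.mulVec y) := by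
  have h := quad_nonneg hS (x + y)
  simp only [mulVec_add, mulVec_sub, add_dotProduct, sub_dotProduct, dotProduct_add,
    dotProduct_sub] at h ⊢
  linarith

variable {Ω : Type*} [MeasurableSpace Ω] {P : Measure Ω} {W : Ω → Fin d → ℝ}

lemma quad_eq_sum (A : Matrix (Fin d) (Fin d) ℝ) (x : Fin d → ℝ) :
    x ⬝ᵥ A.mulVec x = ∑ i, ∑ j, A i j * (x i * x j) := by
  simp only [dotProduct, mulVec, Finset.mul_sum]
  exact Finset.sum_congr rfl fun i _ => Finset.sum_congr rfl fun j _ => by ring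

lemma integrable_quad (A : Matrix (Fin d) (Fin d) ℝ)
    (hW : ∀ i j, Integrable (fun ω => W ω i * W ω j) P) :
    Integrable (fun ω => W ω ⬝ᵥ A.mulVec (W ω)) P := by
  simp only [quad_eq_sum]
  exact integrable_finsetSum _ fun i _ => integrable_finsetSum _ fun j _ => (hW i j).const_mul _

/-- `E[Wᵀ S⁻¹ W] = tr (S⁻¹ S) = d` when `S` is the second moment matrix of `W`. -/
lemma integral_quad {S : Matrix (Fin d) (Fin d) ℝ} (hS : S.PosDef)
    (hW : ∀ i j, Integrable (fun ω => W ω i * W ω j) P)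
    (hcov : ∀ i j, ∫ ω, W ω i * W ω j ∂P = S i j) :
    ∫ ω, W ω ⬝ᵥ S⁻¹.mulVec (W ω) ∂P = d := by
  have hint : ∀ i j, Integrable (fun ω => S⁻¹ i j * (W ω i * W ω j)) P :=
    fun i j => (hW i j).const_mul _
  simp only [quad_eq_sum]
  rw [integral_finsetSum _ fun i _ => integrable_finsetSum _ fun j _ => hint i j]
  simp_rw [integral_finsetSum _ fun j _ => hint _ j, integral_const_mul, hcov]
  have hsymm : ∀ i j, S i j = S j i := fun i j => by
    simpa using hS.isHermitian.apply j i
  have h : (S⁻¹ * S).trace = d := by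
    rw [nonsing_inv_mul _ (isUnit_iff_ne_zero.2 hS.det_pos.ne')]
    simp
  rw [← h]
  simp only [trace, diag, Matrix.mul_apply]
  exact Finset.sum_congr rfl fun i _ => Finset.sum_congr rfl fun j _ => by rw [hsymm i j]

end quad

/-! ### Covariance matrices -/

section cov
variable {Ω : Type*} [MeasurableSpace Ω] {P : Measure Ω} [IsProbabilityMeasure P] {d : ℕ}

lemma vecCov_posSemidef {f : Ω → Fin d → ℝ} (hf : ∀ i, MemLp (fun ω => f ω i) 2 P) :
    (vecCov P f).PosSemidef := by
  have hc : ∀ i, MemLp (fun ω => f ω i - vecMean P f i) 2 P := fun i =>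
    (hf i).sub (memLp_const _)
  refine .of_dotProduct_mulVec_nonneg ?_ fun x => ?_
  · ext i j
    simp only [vecCov, conjTranspose_apply, of_apply, star_trivial]
    exact integral_congr_ae (Filter.Eventually.of_forall fun ω => mul_comm _ _)
  · have hint : ∀ i j, Integrable
        (fun ω => x i * x j * ((f ω i - vecMean P f i) * (f ω j - vecMean P f j))) P :=
      fun i j => ((hc i).integrable_mul (hc j)).const_mul _
    have h : star x ⬝ᵥ (vecCov P f).mulVec x
        = ∫ ω, (∑ i, x i * (f ω i - vecMean P f i)) ^ 2 ∂P := by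
      have h1 : ∀ ω, (∑ i, x i * (f ω i - vecMean P f i)) ^ 2 = ∑ i, ∑ j,
          x i * x j * ((f ω i - vecMean P f i) * (f ω j - vecMean P f j)) := fun ω => by
        rw [sq, Finset.sum_mul_sum]
        exact Finset.sum_congr rfl fun i _ => Finset.sum_congr rfl fun j _ => by ring
      simp_rw [h1]
      rw [integral_finsetSum _ fun i _ => integrable_finsetSum _ fun j _ => hint i j]
      simp_rw [integral_finsetSum _ fun j _ => hint _ j, integral_const_mul]
      rw [star_trivial, quad_eq_sum]
      refine Finset.sum_congr rfl fun i _ => Finset.sum_congr rfl fun j _ => ?_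
      simp only [vecCov, of_apply]
      ring
    rw [h]
    exact integral_nonneg fun ω => sq_nonneg _

/-- The covariance of a signal plus independent centred noise is the sum of the covariances: the
cross terms factor through `E[B] = 0`. -/
lemma integral_centred_add_mul {Y B : Ω → Fin d → ℝ} {SB : Matrix (Fin d) (Fin d) ℝ}
    (hYL : ∀ i, MemLp (fun ω => Y ω i) 2 P) (hBL : ∀ i, MemLp (fun ω => B ω i) 2 P)
    (hBmean : ∀ i, ∫ ω, B ω i ∂P = 0) (hBcov : ∀ i j, ∫ ω, B ω i * B ω j ∂P = SB i j)
    (hindep : IndepFun Y B P) (i j : Fin d) :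
    ∫ ω, (Y ω + B ω - vecMean P Y) i * (Y ω + B ω - vecMean P Y) j ∂P
      = (vecCov P Y + SB) i j := by
  have hDL : ∀ i, MemLp (fun ω => Y ω i - vecMean P Y i) 2 P := fun i =>
    (hYL i).sub (memLp_const _)
  have hcross : ∀ i j, ∫ ω, (Y ω i - vecMean P Y i) * B ω j ∂P = 0 := fun i j => by
    have h : IndepFun (fun ω => Y ω i - vecMean P Y i) (fun ω => B ω j) P :=
      hindep.comp (φ := fun y : Fin d → ℝ => y i - vecMean P Y i) (ψ := fun b : Fin d → ℝ => b j)
        ((measurable_pi_apply i).sub_const _) (measurable_pi_apply j)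
    rw [h.integral_fun_mul_eq_mul_integral (hDL i).aestronglyMeasurable
      (hBL j).aestronglyMeasurable, hBmean, mul_zero]
  have hDD : Integrable (fun ω => (Y ω i - vecMean P Y i) * (Y ω j - vecMean P Y j)) P :=
    (hDL i).integrable_mul (hDL j)
  have hDB : Integrable (fun ω => (Y ω i - vecMean P Y i) * B ω j) P :=
    (hDL i).integrable_mul (hBL j)
  have hBD : Integrable (fun ω => (Y ω j - vecMean P Y j) * B ω i) P :=
    (hDL j).integrable_mul (hBL i)
  have hBB : Integrable (fun ω => B ω i * B ω j) P := (hBL i).integrable_mul (hBL j)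
  have hexp : ∀ ω, (Y ω + B ω - vecMean P Y) i * (Y ω + B ω - vecMean P Y) j =
      (Y ω i - vecMean P Y i) * (Y ω j - vecMean P Y j) + (Y ω i - vecMean P Y i) * B ω j
        + (Y ω j - vecMean P Y j) * B ω i + B ω i * B ω j := fun ω => by
    simp only [Pi.sub_apply, Pi.add_apply]
    ring
  simp_rw [hexp]
  rw [integral_add ((hDD.fun_add hDB).fun_add hBD) hBB, integral_add (hDD.fun_add hDB) hBD,
    integral_add hDD hDB, hcross, hcross, hBcov, Matrix.add_apply]
  simp [vecCov]

end cov

/-! ### Integrability of the log-density of a Gaussian mixture -/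

section logdensity
variable {Ω : Type*} [MeasurableSpace Ω] {P : Measure Ω} [IsProbabilityMeasure P] {d : ℕ}
  {S : Matrix (Fin d) (Fin d) ℝ} {Y : Ω → Fin d → ℝ}

lemma gpdf_le (hS : S.PosDef) (x : Fin d → ℝ) : gpdf 0 S x ≤ gpdf 0 S 0 := by
  unfold gpdf
  have h := quad_nonneg hS x
  refine mul_le_mul_of_nonneg_left (Real.exp_le_exp.2 ?_) (Real.sqrt_nonneg _)
  simp only [sub_zero, zero_dotProduct, mul_zero]
  linarith

/-- The mixture density `z ↦ E[g (z - Y)]`, with `g` the density of `N(0, S)`: the Lebesgue density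
of the sum of `Y` and an independent `N(0, S)` noise. -/
noncomputable def mixDensity (P : Measure Ω) (S : Matrix (Fin d) (Fin d) ℝ) (Y : Ω → Fin d → ℝ)
    (z : Fin d → ℝ) : ENNReal :=
  ∫⁻ ω, ENNReal.ofReal (gpdf 0 S (z - Y ω)) ∂P

lemma mixDensity_le (hS : S.PosDef) (z : Fin d → ℝ) :
    mixDensity P S Y z ≤ ENNReal.ofReal (gpdf 0 S 0) := by
  calc mixDensity P S Y z ≤ ∫⁻ _, ENNReal.ofReal (gpdf 0 S 0) ∂P :=
        lintegral_mono fun ω => ENNReal.ofReal_le_ofReal (gpdf_le hS _)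
    _ = _ := by simp

lemma mixDensity_ne_top (hS : S.PosDef) (z : Fin d → ℝ) : mixDensity P S Y z ≠ ⊤ :=
  ne_top_of_le_ne_top ENNReal.ofReal_ne_top (mixDensity_le hS z)

/-- A Gaussian lower bound for the mixture density: Jensen's inequality for `exp`, after the
exponent has been bounded below using `Q (z - y) ≤ 2 Q z + 2 Q y` for `Q x = xᵀ S⁻¹ x`. -/
lemma exp_le_mixDensity (hS : S.PosDef) (hY : Measurable Y)
    (hY2 : ∀ i j, Integrable (fun ω => Y ω i * Y ω j) P) (z : Fin d → ℝ) :
    Real.exp (Real.log (gpdf 0 S 0) - z ⬝ᵥ S⁻¹.mulVec z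
      - ∫ ω, Y ω ⬝ᵥ S⁻¹.mulVec (Y ω) ∂P) ≤ (mixDensity P S Y z).toReal := by
  have hm : Measurable fun ω => gpdf 0 S (z - Y ω) :=
    (continuous_gpdf 0 S).measurable.comp (measurable_const.sub hY)
  have hYi := integrable_quad S⁻¹ hY2
  have hpos := fun ω => (gpdf_pos 0 hS (z - Y ω))
  have hgint : Integrable (fun ω => gpdf 0 S (z - Y ω)) P :=
    integrable_of_le_of_le (g₁ := fun _ => 0) (g₂ := fun _ => gpdf 0 S 0)
      hm.aestronglyMeasurable (Filter.Eventually.of_forall fun ω => (hpos ω).le)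
      (Filter.Eventually.of_forall fun ω => gpdf_le hS _) (integrable_const _) (integrable_const _)
  have hreal : (mixDensity P S Y z).toReal = ∫ ω, gpdf 0 S (z - Y ω) ∂P := by
    rw [integral_eq_lintegral_of_nonneg_ae (Filter.Eventually.of_forall fun ω => (hpos ω).le)
      hm.aestronglyMeasurable]
    rfl
  have hlow : ∀ ω, Real.log (gpdf 0 S 0) - z ⬝ᵥ S⁻¹.mulVec z - Y ω ⬝ᵥ S⁻¹.mulVec (Y ω)
      ≤ Real.log (gpdf 0 S (z - Y ω)) := fun ω => by
    have := quad_sub_le hS z (Y ω)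
    rw [log_gpdf 0 hS, log_gpdf 0 hS]
    simp only [sub_zero, zero_dotProduct, mul_zero]
    linarith
  have hhint : Integrable (fun ω => Real.log (gpdf 0 S 0) - z ⬝ᵥ S⁻¹.mulVec z
      - Y ω ⬝ᵥ S⁻¹.mulVec (Y ω)) P := (integrable_const _).sub hYi
  have hexp : ∀ ω, Real.exp (Real.log (gpdf 0 S 0) - z ⬝ᵥ S⁻¹.mulVec z
      - Y ω ⬝ᵥ S⁻¹.mulVec (Y ω)) ≤ gpdf 0 S (z - Y ω) := fun ω => by
    rw [← Real.exp_log (hpos ω)]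
    exact Real.exp_le_exp.2 (hlow ω)
  have hexpint : Integrable (fun ω => Real.exp (Real.log (gpdf 0 S 0) - z ⬝ᵥ S⁻¹.mulVec z
      - Y ω ⬝ᵥ S⁻¹.mulVec (Y ω))) P :=
    integrable_of_le_of_le (g₁ := fun _ => 0) (g₂ := fun ω => gpdf 0 S (z - Y ω))
      (Real.continuous_exp.comp_aestronglyMeasurable hhint.aestronglyMeasurable)
      (Filter.Eventually.of_forall fun ω => (Real.exp_pos _).le)
      (Filter.Eventually.of_forall hexp) (integrable_const _) hgint
  have hJ := convexOn_exp.map_integral_le Real.continuous_exp.continuousOn isClosed_univ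
    (Filter.Eventually.of_forall fun _ => Set.mem_univ _) hhint hexpint
  rw [integral_sub (integrable_const _) hYi, integral_const, probReal_univ, one_smul] at hJ
  rw [hreal]
  exact hJ.trans (integral_mono hexpint hgint hexp)

lemma mixDensity_toReal_pos (hS : S.PosDef) (hY : Measurable Y)
    (hY2 : ∀ i j, Integrable (fun ω => Y ω i * Y ω j) P) (z : Fin d → ℝ) :
    0 < (mixDensity P S Y z).toReal :=
  (Real.exp_pos _).trans_le (exp_le_mixDensity hS hY hY2 z)

lemma measurable_mixDensity (hY : Measurable Y) : Measurable (mixDensity P S Y) := by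
  have hd' : Measurable fun p : (Fin d → ℝ) × Ω => ENNReal.ofReal (gpdf 0 S (p.1 - Y p.2)) :=
    ((continuous_gpdf 0 S).measurable.comp (by fun_prop)).ennreal_ofReal
  exact hd'.lintegral_prod_right'

lemma integrable_log_mixDensity (hS : S.PosDef) (hY : Measurable Y)
    (hY2 : ∀ i j, Integrable (fun ω => Y ω i * Y ω j) P) {Z : Ω → Fin d → ℝ} (hZ : Measurable Z)
    (hZ2 : ∀ i j, Integrable (fun ω => Z ω i * Z ω j) P) :
    Integrable (fun ω => Real.log (mixDensity P S Y (Z ω)).toReal) P := by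
  have hm := measurable_mixDensity (P := P) (S := S) hY
  refine integrable_of_le_of_le (g₁ := fun ω => Real.log (gpdf 0 S 0) - Z ω ⬝ᵥ S⁻¹.mulVec (Z ω)
      - ∫ ω, Y ω ⬝ᵥ S⁻¹.mulVec (Y ω) ∂P) (g₂ := fun _ => Real.log (gpdf 0 S 0)) ?_ ?_ ?_ ?_
    (integrable_const _)
  · exact (Real.measurable_log.comp (hm.comp hZ).ennreal_toReal).aestronglyMeasurable
  · refine Filter.Eventually.of_forall fun ω => ?_
    exact (Real.le_log_iff_exp_le (mixDensity_toReal_pos hS hY hY2 _)).2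
      (exp_le_mixDensity hS hY hY2 _)
  · refine Filter.Eventually.of_forall fun ω => ?_
    refine Real.log_le_log (mixDensity_toReal_pos hS hY hY2 _) ?_
    exact ENNReal.toReal_le_of_le_ofReal (gpdf_pos 0 hS 0).le (mixDensity_le hS _)
  · exact ((integrable_const _).sub (integrable_quad S⁻¹ hZ2)).sub (integrable_const _)

end logdensity

/-- With `Z = M(X) + B`, `B ~ N(0, S_B)` independent of `X`, `S_B`
positive definite, `M(X)` having finite second moments with mean `μ_M` and covariance
`S_M`, the Gaussian surrogate bound `(1/2) log det(I + S_M S_B⁻¹)` exceeds `MI(X;Z)` by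
exactly `D_KL(Law(Z) ‖ N(μ_M, S_M + S_B))`; in particular the difference is nonnegative,
and it vanishes iff `Law(Z) = N(μ_M, S_M + S_B)`. -/
theorem stmt0 {Ω 𝓧 : Type*} [MeasurableSpace Ω] [MeasurableSpace 𝓧]
    (P : Measure Ω) [IsProbabilityMeasure P] {d : ℕ}
    (X : Ω → 𝓧) (hX : Measurable X)
    (M : 𝓧 → Fin d → ℝ) (hM : Measurable M)
    (hM2 : ∀ i j, Integrable (fun ω => M (X ω) i * M (X ω) j) P)
    (B : Ω → Fin d → ℝ) (hB : Measurable B)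
    (SB : Matrix (Fin d) (Fin d) ℝ) (hSB : SB.PosDef)
    (hBlaw : P.map B = mvGaussian 0 SB)
    (hindep : ProbabilityTheory.IndepFun X B P)
    (Z : Ω → Fin d → ℝ) (hZ : Z = fun ω => M (X ω) + B ω)
    (μM : Fin d → ℝ) (hμM : μM = vecMean P fun ω => M (X ω))
    (SM : Matrix (Fin d) (Fin d) ℝ) (hSM : SM = vecCov P fun ω => M (X ω)) :
    mutualInfo P X Z + klDivM (P.map Z) (mvGaussian μM (SM + SB))
        = (((1 / 2 : ℝ) * Real.log ((1 + SM * SB⁻¹).det) : ℝ) : EReal) ∧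
      mutualInfo P X Z ≤ (((1 / 2 : ℝ) * Real.log ((1 + SM * SB⁻¹).det) : ℝ) : EReal) ∧
      (klDivM (P.map Z) (mvGaussian μM (SM + SB)) = 0 ↔
        P.map Z = mvGaussian μM (SM + SB)) := by
  set Y : Ω → Fin d → ℝ := fun ω => M (X ω) with hYdef
  have hY : Measurable Y := hM.comp hX
  have hYi : ∀ i, Measurable fun ω => Y ω i := fun i => (measurable_pi_apply i).comp hY
  have hZm : Measurable Z := by rw [hZ]; exact hY.add hB
  have hYL : ∀ i, MemLp (fun ω => Y ω i) 2 P := fun i =>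
    (memLp_two_iff_integrable_sq (hYi i).aestronglyMeasurable).2 (by
      simpa only [sq] using hM2 i i)
  have hBL : ∀ i, MemLp (fun ω => B ω i) 2 P := fun i =>
    (memLp_map_measure_iff (measurable_pi_apply i).aestronglyMeasurable hB.aemeasurable).1
      (hBlaw ▸ memLp_mvGaussian hSB i)
  have hBmean : ∀ i, ∫ ω, B ω i ∂P = 0 := fun i => by
    rw [← integral_mvGaussian hSB i, ← hBlaw,
      integral_map hB.aemeasurable (measurable_pi_apply i).aestronglyMeasurable]
  have hBcov : ∀ i j, ∫ ω, B ω i * B ω j ∂P = SB i j := fun i j => by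
    rw [← integral_mvGaussian_mul hSB i j, ← hBlaw,
      integral_map hB.aemeasurable (by fun_prop)]
  have hB2 : ∀ i j, Integrable (fun ω => B ω i * B ω j) P := fun i j =>
    (hBL i).integrable_mul (hBL j)
  have hSMps : SM.PosSemidef := hSM ▸ vecCov_posSemidef hYL
  have hS : (SM + SB).PosDef := hSB.posSemidef_add hSMps
  have hZL : ∀ i, MemLp (fun ω => Z ω i) 2 P := fun i => by
    rw [hZ]; exact (hYL i).add (hBL i)
  have hZ2 : ∀ i j, Integrable (fun ω => Z ω i * Z ω j) P := fun i j =>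
    (hZL i).integrable_mul (hZL j)
  have hWL : ∀ i, MemLp (fun ω => (Z ω - μM) i) 2 P := fun i => (hZL i).sub (memLp_const _)
  have hW2 : ∀ i j, Integrable (fun ω => (Z ω - μM) i * (Z ω - μM) j) P := fun i j =>
    (hWL i).integrable_mul (hWL j)
  have hWcov : ∀ i j, ∫ ω, (Z ω - μM) i * (Z ω - μM) j ∂P = (SM + SB) i j := fun i j => by
    rw [hZ, hμM, hSM]
    exact integral_centred_add_mul hYL hBL hBmean hBcov (hindep.comp hM measurable_id) i j
  have hg : Measurable fun x => ENNReal.ofReal (gpdf 0 SB x) :=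
    (continuous_gpdf 0 SB).measurable.ennreal_ofReal
  have hBlaw' : P.map B = volume.withDensity fun x => ENNReal.ofReal (gpdf 0 SB x) := hBlaw
  have hgS : Measurable fun x => ENNReal.ofReal (gpdf μM (SM + SB) x) :=
    (continuous_gpdf μM (SM + SB)).measurable.ennreal_ofReal
  have hq := measurable_mixDensity (P := P) (S := SB) hY
  have hqpos := mixDensity_toReal_pos (P := P) hSB hY hM2
  have hq0 : ∀ z, mixDensity P SB Y z ≠ 0 := fun z h0 => by
    have := hqpos z
    simp [h0] at this
  have hqtop : ∀ z, mixDensity P SB Y z ≠ ⊤ := fun z => mixDensity_ne_top hSB z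
  have hZlaw : P.map Z = volume.withDensity (mixDensity P SB Y) := by
    have h := map_sum_eq hX hM hB hg hBlaw' hindep
    rw [← hZ] at h
    exact h
  have : IsProbabilityMeasure (mvGaussian μM (SM + SB)) := isProbabilityMeasure_mvGaussian _ hS
  have : IsProbabilityMeasure (P.map Z) := Measure.isProbabilityMeasure_map hZm.aemeasurable
  have : IsProbabilityMeasure (P.map X) := Measure.isProbabilityMeasure_map hX.aemeasurable
  have hZG : P.map Z = (mvGaussian μM (SM + SB)).withDensity fun z =>
      mixDensity P SB Y z / ENNReal.ofReal (gpdf μM (SM + SB) z) := by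
    rw [hZlaw, mvGaussian_eq, withDensity_withDensity_div hgS hq
      (fun z => (ENNReal.ofReal_pos.2 (gpdf_pos _ hS z)).ne') fun _ => ENNReal.ofReal_ne_top]
  have hfZ : Measurable fun z =>
    mixDensity P SB Y z / ENNReal.ofReal (gpdf μM (SM + SB) z) := hq.div hgS
  have hd : Measurable fun p : 𝓧 × (Fin d → ℝ) => ENNReal.ofReal (gpdf 0 SB (p.2 - M p.1)) :=
    hg.comp (by fun_prop)
  have hq2 : Measurable fun p : 𝓧 × (Fin d → ℝ) => mixDensity P SB Y p.2 :=
    hq.comp measurable_snd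
  have hXZ : P.map (fun ω => (X ω, Z ω)) = ((P.map X).prod (P.map Z)).withDensity fun p =>
      ENNReal.ofReal (gpdf 0 SB (p.2 - M p.1)) / mixDensity P SB Y p.2 := by
    have hjoint := map_joint_eq hX hM hB hg hBlaw' hindep
    simp only [← congrFun hZ] at hjoint
    have : SFinite (volume.withDensity (mixDensity P SB Y)) := hZlaw ▸ inferInstance
    rw [hZlaw, prod_withDensity_right hq, withDensity_withDensity_div hq2 hd
      (fun _ => hq0 _) fun _ => hqtop _, hjoint]
  have hfXZ : Measurable fun p : 𝓧 × (Fin d → ℝ) =>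
    ENNReal.ofReal (gpdf 0 SB (p.2 - M p.1)) / mixDensity P SB Y p.2 := hd.div hq2
  -- Integrability of each log-density separately allows the log-likelihood ratios to be split.
  have hlq := integrable_log_mixDensity hSB hY hM2 hZm hZ2
  have hQB := integrable_quad SB⁻¹ hB2
  have hQZ := integrable_quad (SM + SB)⁻¹ hW2
  have hlB : Integrable (fun ω => Real.log (gpdf 0 SB (B ω))) P := by
    simp only [log_gpdf _ hSB, sub_zero]
    exact (integrable_const _).sub (hQB.const_mul _)
  have hlZ : Integrable (fun ω => Real.log (gpdf μM (SM + SB) (Z ω))) P := by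
    simp only [log_gpdf _ hS]
    exact (integrable_const _).sub (hQZ.const_mul _)
  have hMI : mutualInfo P X Z = ((∫ ω, Real.log (gpdf 0 SB (B ω)) ∂P
      - ∫ ω, Real.log (mixDensity P SB Y (Z ω)).toReal ∂P : ℝ) : EReal) := by
    have hlog : ∀ ω, Real.log (ENNReal.ofReal (gpdf 0 SB (Z ω - M (X ω)))
        / mixDensity P SB Y (Z ω)).toReal
        = Real.log (gpdf 0 SB (B ω)) - Real.log (mixDensity P SB Y (Z ω)).toReal := fun ω => by
      rw [ENNReal.toReal_div, ENNReal.toReal_ofReal (gpdf_pos 0 hSB _).le,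
        Real.log_div (gpdf_pos 0 hSB _).ne' (hqpos _).ne']
      simp [hZ, hYdef]
    rw [mutualInfo, klDivM_map_of_withDensity (hX.prodMk hZm) hfXZ hXZ]
    · simp only [hlog]
      rw [integral_sub hlB hlq]
    · simp only [hlog]
      exact hlB.sub hlq
  have hKL : klDivM (P.map Z) (mvGaussian μM (SM + SB)) =
      ((∫ ω, Real.log (mixDensity P SB Y (Z ω)).toReal ∂P
      - ∫ ω, Real.log (gpdf μM (SM + SB) (Z ω)) ∂P : ℝ) : EReal) := by
    have hlog : ∀ ω, Real.log (mixDensity P SB Y (Z ω)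
        / ENNReal.ofReal (gpdf μM (SM + SB) (Z ω))).toReal
        = Real.log (mixDensity P SB Y (Z ω)).toReal
          - Real.log (gpdf μM (SM + SB) (Z ω)) := fun ω => by
      rw [ENNReal.toReal_div, ENNReal.toReal_ofReal (gpdf_pos _ hS _).le,
        Real.log_div (hqpos _).ne' (gpdf_pos _ hS _).ne']
    rw [klDivM_map_of_withDensity hZm hfZ hZG]
    · simp only [hlog]
      rw [integral_sub hlq hlZ]
    · simp only [hlog]
      exact hlq.sub hlZ
  -- In both Gaussian terms the expected quadratic form is `d`, so these contributions cancel later.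
  have hIB : ∫ ω, Real.log (gpdf 0 SB (B ω)) ∂P = -(1 / 2) * Real.log ((2 * Real.pi) ^ d)
      - (1 / 2) * Real.log SB.det - (1 / 2) * d := by
    simp only [log_gpdf _ hSB, sub_zero]
    rw [integral_sub (integrable_const _) (hQB.const_mul _), integral_const, integral_const_mul,
      integral_quad hSB hB2 hBcov, probReal_univ, one_smul]
  have hIZ : ∫ ω, Real.log (gpdf μM (SM + SB) (Z ω)) ∂P
      = -(1 / 2) * Real.log ((2 * Real.pi) ^ d)
      - (1 / 2) * Real.log (SM + SB).det - (1 / 2) * d := by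
    simp only [log_gpdf _ hS]
    rw [integral_sub (integrable_const _) (hQZ.const_mul _), integral_const, integral_const_mul,
      integral_quad hS hW2 hWcov, probReal_univ, one_smul]
  have hdet : (1 + SM * SB⁻¹).det = (SM + SB).det / SB.det := by
    have : 1 + SM * SB⁻¹ = (SM + SB) * SB⁻¹ := by
      rw [Matrix.add_mul, mul_nonsing_inv _ (isUnit_iff_ne_zero.2 hSB.det_pos.ne'), add_comm]
    rw [this, det_mul, det_nonsing_inv, Ring.inverse_eq_inv', div_eq_mul_inv]
  have hsum : mutualInfo P X Z + klDivM (P.map Z) (mvGaussian μM (SM + SB))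
      = (((1 / 2 : ℝ) * Real.log ((1 + SM * SB⁻¹).det) : ℝ) : EReal) := by
    rw [hMI, hKL, ← EReal.coe_add, hIB, hIZ, hdet, Real.log_div hS.det_pos.ne' hSB.det_pos.ne']
    congr 1
    ring
  refine ⟨hsum, ?_, ?_⟩
  · rw [← hsum]
    refine le_add_of_nonneg_right ?_
    rw [klDivM_eq_klDiv]
    exact EReal.coe_ennreal_nonneg _
  · rw [klDivM_eq_klDiv, EReal.coe_ennreal_eq_zero, InformationTheory.klDiv_eq_zero_iff]
end

section
/- Fix d ≥ 1, real numbers r_1, …, r_d > 0 and β > 0. The optimization problem: minimize Σ_{i=1}^d ℓ_i over (ℓ_1, …, ℓ_d) ∈ (0, ∞)^d subject to (1/2)·Σ_{i=1}^d log(1 + r_i/ℓ_i) = β, has a unique minimizer ℓ*. Moreover ℓ* is characterized as follows: there exists a unique λ* > 0 such that ℓ*_i = (−r_i + √(r_i² + 2λ* r_i))/2 for every i and (1/2)·Σ_{i=1}^d log(1 + r_i/ℓ*_i) = β. -/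
/-!
For `λ > 0` let `ℓᵢ(λ) = (−rᵢ + √(rᵢ² + 2 λ rᵢ))/2`, the positive root of `ℓ (ℓ + rᵢ) = λ rᵢ / 2`; this
is the stationarity condition of the Lagrangian `Σ ℓᵢ + λ · (1/2) Σ log (1 + rᵢ/ℓᵢ)`. Every map
`x ↦ log (1 + rᵢ/x)` is strictly convex on `(0, ∞)`, with slope `−2/λ` at `ℓᵢ(λ)`
(`log_tangent_lt`), the same for all `i`. Summing the tangent inequalities shows that if `ℓ(λ)` is
feasible, then any other feasible point has a strictly larger sum
(`sum_stationary_lt_of_feasible`). The constraint value at `ℓ(λ)` is continuous in `λ`, is at least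
`β` for a suitable small `λ` and tends to `0` as `λ → ∞`, so the intermediate value theorem gives a
feasible `ℓ(λ)` (`exists_feasible_stationary`). Finally, `λ` is recovered from any coordinate by
`λ = 2 ℓᵢ (ℓᵢ + rᵢ) / rᵢ`.
-/

open Finset

/-- A point `ℓ ∈ (0,∞)^d` is feasible if it satisfies the constraint
`(1/2) Σᵢ log(1 + rᵢ/ℓᵢ) = β`. -/
def Feasible {d : ℕ} (r : Fin d → ℝ) (β : ℝ) (ℓ : Fin d → ℝ) : Prop :=
  (∀ i, 0 < ℓ i) ∧ (1 / 2 : ℝ) * ∑ i, Real.log (1 + r i / ℓ i) = β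

/-- `ℓ` is a minimizer of `Σᵢ ℓᵢ` among feasible points. -/
def IsMinimizer {d : ℕ} (r : Fin d → ℝ) (β : ℝ) (ℓ : Fin d → ℝ) : Prop :=
  Feasible r β ℓ ∧ ∀ ℓ' : Fin d → ℝ, Feasible r β ℓ' → ∑ i, ℓ i ≤ ∑ i, ℓ' i

open Filter Topology

/-- The stationary value `(−r + √(r² + 2 λ r))/2` of a coordinate with eigenvalue `r` at
Lagrange multiplier `lam`. -/
noncomputable def stationary (r lam : ℝ) : ℝ :=
  (-r + Real.sqrt (r ^ 2 + 2 * lam * r)) / 2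

lemma stationary_pos {r lam : ℝ} (hr : 0 < r) (hl : 0 < lam) : 0 < stationary r lam := by
  have h : r < Real.sqrt (r ^ 2 + 2 * lam * r) := by
    apply Real.lt_sqrt_of_sq_lt
    have := mul_pos hl hr
    linarith
  unfold stationary
  linarith

lemma stationary_mul_add {r lam : ℝ} (hr : 0 < r) (hl : 0 < lam) :
    stationary r lam * (stationary r lam + r) = lam * r / 2 := by
  have h : Real.sqrt (r ^ 2 + 2 * lam * r) ^ 2 = r ^ 2 + 2 * lam * r :=
    Real.sq_sqrt (by positivity)
  unfold stationary
  linear_combination h / 4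

lemma stationary_le {r lam : ℝ} (hr : 0 < r) (hl : 0 < lam) : stationary r lam ≤ lam / 2 := by
  have h : Real.sqrt (r ^ 2 + 2 * lam * r) ≤ r + lam := by
    apply Real.sqrt_le_iff.2
    constructor
    · positivity
    · nlinarith [sq_nonneg lam]
  unfold stationary
  linarith

/-- Strict convexity of `x ↦ log (1 + r/x)` on `(0, ∞)`: its graph lies strictly above the tangent
line at `a`, away from `a`. -/
lemma log_tangent_lt {r a x : ℝ} (hr : 0 < r) (ha : 0 < a) (hx : 0 < x) (hne : x ≠ a) :
    Real.log (1 + r / a) - r / (a * (a + r)) * (x - a) < Real.log (1 + r / x) := by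
  have hq : 0 < (1 + r / a) / (1 + r / x) := by positivity
  -- With `q = (1 + r/a)/(1 + r/x)`, the bound `log q ≤ q - 1` already suffices.
  have h1 := Real.log_le_sub_one_of_pos hq
  rw [Real.log_div (by positivity) (by positivity)] at h1
  have h2 : r / (a * (a + r)) * (x - a) - ((1 + r / a) / (1 + r / x) - 1)
      = r * (x - a) ^ 2 / (a * (x + r) * (a + r)) := by
    field_simp
    ring
  have h3 : 0 < r * (x - a) ^ 2 / (a * (x + r) * (a + r)) := by
    have := sub_ne_zero.2 hne
    positivity
  linarith

lemma log_tangent_le {r a x : ℝ} (hr : 0 < r) (ha : 0 < a) (hx : 0 < x) :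
    Real.log (1 + r / a) - r / (a * (a + r)) * (x - a) ≤ Real.log (1 + r / x) := by
  rcases eq_or_ne x a with rfl | hne
  · simp
  · exact (log_tangent_lt hr ha hx hne).le

lemma stationary_slope {r lam : ℝ} (hr : 0 < r) (hl : 0 < lam) :
    r / (stationary r lam * (stationary r lam + r)) = 2 / lam := by
  rw [stationary_mul_add hr hl]
  field_simp

lemma sum_stationary_lt_of_feasible {d : ℕ} {r : Fin d → ℝ} (hr : ∀ i, 0 < r i) {β lam : ℝ}
    (hl : 0 < lam) (hf : Feasible r β fun i => stationary (r i) lam) {x : Fin d → ℝ}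
    (hx : Feasible r β x) (hne : x ≠ fun i => stationary (r i) lam) :
    ∑ i, stationary (r i) lam < ∑ i, x i := by
  obtain ⟨j, hj⟩ := Function.ne_iff.1 hne
  have h : ∑ i, (Real.log (1 + r i / stationary (r i) lam)
      - 2 / lam * (x i - stationary (r i) lam)) < ∑ i, Real.log (1 + r i / x i) := by
    apply Finset.sum_lt_sum
    · intro i _
      rw [← stationary_slope (hr i) hl]
      exact log_tangent_le (hr i) (stationary_pos (hr i) hl) (hx.1 i)
    · refine ⟨j, Finset.mem_univ j, ?_⟩
      rw [← stationary_slope (hr j) hl]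
      exact log_tangent_lt (hr j) (stationary_pos (hr j) hl) (hx.1 j) hj
  rw [Finset.sum_sub_distrib, ← Finset.mul_sum, Finset.sum_sub_distrib] at h
  have e1 := hf.2
  have e2 := hx.2
  have h2 : 0 < 2 / lam * (∑ i, x i - ∑ i, stationary (r i) lam) := by linarith
  have h3 := (mul_pos_iff_of_pos_left (by positivity : 0 < 2 / lam)).1 h2
  linarith

lemma tendsto_stationary {r : ℝ} (hr : 0 < r) : Tendsto (stationary r) atTop atTop := by
  unfold stationary
  apply Tendsto.atTop_div_const (by norm_num)
  apply tendsto_atTop_add_const_left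
  apply Real.tendsto_sqrt_atTop.comp
  apply tendsto_atTop_add_const_left
  apply Tendsto.atTop_mul_const hr
  exact tendsto_id.const_mul_atTop (by norm_num)

lemma exists_feasible_stationary {d : ℕ} (hd : 1 ≤ d) {r : Fin d → ℝ} (hr : ∀ i, 0 < r i)
    {β : ℝ} (hβ : 0 < β) :
    ∃ lam, 0 < lam ∧ Feasible r β fun i => stationary (r i) lam := by
  set f : ℝ → ℝ := fun lam => (1 / 2 : ℝ) * ∑ i, Real.log (1 + r i / stationary (r i) lam)
    with hf
  have hcont : ContinuousOn f (Set.Ioi 0) := by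
    refine continuousOn_const.mul (continuousOn_finsetSum _ fun i _ => ?_)
    have hs : ContinuousOn (stationary (r i)) (Set.Ioi 0) := by
      unfold stationary
      fun_prop
    refine ContinuousOn.log (continuousOn_const.add (continuousOn_const.div hs ?_)) ?_
    · intro l hl
      exact (stationary_pos (hr i) hl).ne'
    · intro l hl
      have := stationary_pos (hr i) hl
      have := hr i
      positivity
  have hlim : Tendsto f atTop (𝓝 0) := by
    have h : ∀ i, Tendsto (fun lam => Real.log (1 + r i / stationary (r i) lam)) atTop (𝓝 0) := by
      intro i
      have h1 : Tendsto (fun lam => 1 + r i / stationary (r i) lam) atTop (𝓝 1) := by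
        simpa using ((tendsto_stationary (hr i)).const_div_atTop (r i)).const_add 1
      simpa using h1.log one_ne_zero
    simpa [hf] using (tendsto_finsetSum Finset.univ fun i _ => h i).const_mul (1 / 2 : ℝ)
  obtain ⟨b, hb, hb0⟩ := ((hlim.eventually_lt_const hβ).and (eventually_gt_atTop 0)).exists
  -- `a` is chosen so that `1 + 2 rⱼ / a = exp (2 β)`: a single coordinate then reaches `β`.
  let j : Fin d := ⟨0, hd⟩
  have he : 0 < Real.exp (2 * β) - 1 := by
    have := Real.one_lt_exp_iff.2 (by positivity : 0 < 2 * β)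
    linarith
  have hrj := hr j
  set a := 2 * r j / (Real.exp (2 * β) - 1) with ha
  have ha0 : 0 < a := by positivity
  have hfa : β ≤ f a := by
    have h1 : 2 * β ≤ Real.log (1 + r j / stationary (r j) a) := by
      rw [Real.le_log_iff_exp_le (by have := stationary_pos hrj ha0; positivity)]
      have h2 : r j / (a / 2) ≤ r j / stationary (r j) a :=
        div_le_div_of_nonneg_left hrj.le (stationary_pos hrj ha0) (stationary_le hrj ha0)
      have h3 : r j / (a / 2) = Real.exp (2 * β) - 1 := by
        rw [ha]
        field_simp
      linarith
    have h4 : Real.log (1 + r j / stationary (r j) a)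
        ≤ ∑ i, Real.log (1 + r i / stationary (r i) a) := by
      apply Finset.single_le_sum (f := fun i => Real.log (1 + r i / stationary (r i) a))
        _ (Finset.mem_univ j)
      intro i _
      apply Real.log_nonneg
      have := div_pos (hr i) (stationary_pos (hr i) ha0)
      linarith
    simp only [hf]
    linarith
  obtain ⟨l, hl, hfl⟩ :=
    isPreconnected_Ioi.intermediate_value (Set.mem_Ioi.2 hb0) (Set.mem_Ioi.2 ha0) hcont
      ⟨hb.le, hfa⟩
  exact ⟨l, hl, fun i => stationary_pos (hr i) hl, hfl⟩

/-- For `d ≥ 1`, `rᵢ > 0` and `β > 0`, the problem of minimizing `Σᵢ ℓᵢ`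
over `(0,∞)^d` subject to `(1/2) Σᵢ log(1 + rᵢ/ℓᵢ) = β` has a unique minimizer `ℓ*`,
characterized by: there is a unique `λ* > 0` with
`ℓ*ᵢ = (−rᵢ + √(rᵢ² + 2 λ* rᵢ))/2` for all `i`, and `ℓ*` satisfies the constraint. -/
theorem stmt2 {d : ℕ} (hd : 1 ≤ d) (r : Fin d → ℝ) (hr : ∀ i, 0 < r i)
    (β : ℝ) (hβ : 0 < β) :
    (∃! ℓ : Fin d → ℝ, IsMinimizer r β ℓ) ∧
      ∀ ℓ : Fin d → ℝ, IsMinimizer r β ℓ →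
        ∃! lam : ℝ, 0 < lam ∧
          (∀ i, ℓ i = (-(r i) + Real.sqrt ((r i) ^ 2 + 2 * lam * r i)) / 2) ∧
          (1 / 2 : ℝ) * ∑ i, Real.log (1 + r i / ℓ i) = β := by
  obtain ⟨lam, hl, hf⟩ := exists_feasible_stationary hd hr hβ
  have hmin : IsMinimizer r β fun i => stationary (r i) lam := by
    refine ⟨hf, fun x hx => ?_⟩
    rcases eq_or_ne x fun i => stationary (r i) lam with rfl | hne
    · exact le_rfl
    · exact (sum_stationary_lt_of_feasible hr hl hf hx hne).le
  have huniq : ∀ x, IsMinimizer r β x → x = fun i => stationary (r i) lam := by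
    intro x hx
    by_contra hne
    exact (sum_stationary_lt_of_feasible hr hl hf hx.1 hne).not_ge (hx.2 _ hf)
  refine ⟨⟨_, hmin, huniq⟩, fun x hx => ?_⟩
  refine ⟨lam, ⟨hl, fun i => congrFun (huniq x hx) i, hx.1.2⟩, ?_⟩
  rintro m ⟨hm, hxm, -⟩
  let j : Fin d := ⟨0, hd⟩
  have hj : stationary (r j) m = stationary (r j) lam :=
    (hxm j).symm.trans (congrFun (huniq x hx) j)
  have h1 := stationary_mul_add (hr j) hm
  rw [hj, stationary_mul_add (hr j) hl] at h1
  exact mul_right_cancel₀ (hr j).ne' (by linarith)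
end

section
/- Let X, Y₁, …, Y_k be random variables on finite sets such that Y₁, …, Y_k are conditionally independent given X. If H(X | Y_i) ≥ β̂_i for each i = 1, …, k, then the conditional entropy given all outputs jointly satisfies H(X | Y₁, …, Y_k) ≥ Σ_{i=1}^k β̂_i − (k−1)·H(X). -/
/-!
Write `π`, `q`, `m_i`, `n_i` for the laws of `X`, `Y = (Y_1, …, Y_k)`, `(X, Y_i)` and `Y_i`.
Every entropy in the claim is a sum against the joint law `p`, of `log q - log p` for `H(X|Y)`, of
`log n_i - log m_i` for `H(X|Y_i)` and of `-log π` for `H(X)`. Conditional independence gives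
`log p = log π + ∑ i, (log m_i - log π)` wherever `p > 0`, so that
`H(X|Y) + (k - 1) H(X) - ∑ i, H(X|Y_i) = ∑ y, q y * (log (q y) - ∑ i, log (n_i (y i)))`.
The right-hand side is the relative entropy of the law of `Y` with respect to the product of its
marginals, which is nonnegative by Gibbs' inequality.
-/

open Finset

section Defs

variable {α β : Type*} [Fintype α] [Fintype β]

/-- Shannon entropy of a pmf on a finite type. -/
noncomputable def shannonEntropy (p : α → ℝ) : ℝ :=
  -∑ x, p x * Real.log (p x)

/-- Marginal of the first coordinate of a joint pmf. -/
def margFst (p : α × β → ℝ) (a : α) : ℝ := ∑ b, p (a, b)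

/-- Marginal of the second coordinate of a joint pmf. -/
def margSnd (p : α × β → ℝ) (b : β) : ℝ := ∑ a, p (a, b)

/-- Conditional entropy `H(A|B) = Σ_b P(B=b) H(P_{A|B=b})` of a joint pmf on `α × β`. -/
noncomputable def condEntropy (p : α × β → ℝ) : ℝ :=
  ∑ b, margSnd p b * shannonEntropy (fun a => p (a, b) / margSnd p b)

/-- Mutual information `MI(A;B) = H(A) − H(A|B)` of a joint pmf on `α × β`. -/
noncomputable def mutualInfoFin (p : α × β → ℝ) : ℝ :=
  shannonEntropy (margFst p) - condEntropy p

end Defs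

variable {𝒳 : Type*} [Fintype 𝒳] {k : ℕ} {𝒴 : Fin k → Type*}
  [∀ i, Fintype (𝒴 i)] [∀ i, DecidableEq (𝒴 i)]

/-- Joint pmf of `(X, Y_i)` obtained from the joint pmf of `(X, (Y_1, …, Y_k))`. -/
def pairMarg (p : 𝒳 × (∀ i, 𝒴 i) → ℝ) (i : Fin k) : 𝒳 × 𝒴 i → ℝ :=
  fun z => ∑ y : ∀ j, 𝒴 j, if y i = z.2 then p (z.1, y) else 0

/-- `Y_1, …, Y_k` are conditionally independent given `X`:
`P(Y=y | X=x) = Π_i P(Y_i = y_i | X=x)` whenever `P(X=x) > 0`. -/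
def CondIndepGiven (p : 𝒳 × (∀ i, 𝒴 i) → ℝ) : Prop :=
  ∀ x y, 0 < margFst p x →
    p (x, y) = margFst p x * ∏ i, (pairMarg p i (x, y i) / margFst p x)

/-- Terms with `p (a, b) = 0` vanish, so that the logarithm of the quotient may be split. -/
lemma condEntropy_eq_sum {α β : Type*} [Fintype α] [Fintype β] (p : α × β → ℝ)
    (hp : ∀ z, 0 ≤ p z) :
    condEntropy p = ∑ a, ∑ b, p (a, b) * (Real.log (margSnd p b) - Real.log (p (a, b))) := by
  rw [Finset.sum_comm]
  unfold condEntropy shannonEntropy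
  refine Finset.sum_congr rfl fun b _ => ?_
  rw [← Finset.sum_neg_distrib, Finset.mul_sum]
  refine Finset.sum_congr rfl fun a _ => ?_
  rcases (hp (a, b)).eq_or_lt with h | h
  · simp [← h]
  · have hq : 0 < margSnd p b :=
      lt_of_lt_of_le h (Finset.single_le_sum (f := fun a => p (a, b))
        (fun a _ => hp (a, b)) (Finset.mem_univ a))
    rw [Real.log_div h.ne' hq.ne']
    field_simp
    ring

/-- Integrating a function of `(X, Y_i)` against the law of `(X, Y_i)` or against the joint law of
`(X, Y)` gives the same result. -/
lemma sum_pairMarg_mul (p : 𝒳 × (∀ i, 𝒴 i) → ℝ) (i : Fin k) (x : 𝒳) (f : 𝒴 i → ℝ) :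
    ∑ b, pairMarg p i (x, b) * f b = ∑ y : ∀ j, 𝒴 j, p (x, y) * f (y i) := by
  classical
  simp only [pairMarg, Finset.sum_mul]
  rw [Finset.sum_comm]
  refine Finset.sum_congr rfl fun y _ => ?_
  simp [ite_mul]

lemma pairMarg_nonneg (p : 𝒳 × (∀ i, 𝒴 i) → ℝ) (hp0 : ∀ z, 0 ≤ p z) (i : Fin k)
    (z : 𝒳 × 𝒴 i) : 0 ≤ pairMarg p i z := by
  refine Finset.sum_nonneg fun y _ => ?_
  split_ifs
  · exact hp0 _
  · exact le_rfl

lemma le_pairMarg (p : 𝒳 × (∀ i, 𝒴 i) → ℝ) (hp0 : ∀ z, 0 ≤ p z) (i : Fin k)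
    (x : 𝒳) (y : ∀ j, 𝒴 j) : p (x, y) ≤ pairMarg p i (x, y i) := by
  classical
  have h := Finset.single_le_sum
    (f := fun y' : ∀ j, 𝒴 j => if y' i = y i then p (x, y') else 0)
    (fun y' _ => by
      split_ifs
      · exact hp0 _
      · exact le_rfl) (Finset.mem_univ y)
  simpa [pairMarg] using h

lemma margSnd_le_margSnd_pairMarg (p : 𝒳 × (∀ i, 𝒴 i) → ℝ) (hp0 : ∀ z, 0 ≤ p z) (i : Fin k)
    (y : ∀ j, 𝒴 j) : margSnd p y ≤ margSnd (pairMarg p i) (y i) :=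
  Finset.sum_le_sum fun x _ => le_pairMarg p hp0 i x y

lemma sum_margSnd_pairMarg (p : 𝒳 × (∀ i, 𝒴 i) → ℝ) (hp1 : ∑ z, p z = 1) (i : Fin k) :
    ∑ b, margSnd (pairMarg p i) b = 1 := by
  unfold margSnd
  rw [Finset.sum_comm, ← hp1, Fintype.sum_prod_type]
  refine Finset.sum_congr rfl fun x _ => ?_
  simpa using sum_pairMarg_mul p i x (fun _ => 1)

/-- Gibbs' inequality: the relative entropy of the law of `Y` with respect to the product of the
laws of the `Y_i` is nonnegative. -/
lemma relEntropy_prod_nonneg (p : 𝒳 × (∀ i, 𝒴 i) → ℝ) (hp0 : ∀ z, 0 ≤ p z)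
    (hp1 : ∑ z, p z = 1) :
    0 ≤ ∑ y : ∀ j, 𝒴 j, margSnd p y *
      (Real.log (margSnd p y) - ∑ i, Real.log (margSnd (pairMarg p i) (y i))) := by
  classical
  have hq1 : ∑ y : ∀ j, 𝒴 j, margSnd p y = 1 := by
    unfold margSnd
    rw [Finset.sum_comm, ← hp1, Fintype.sum_prod_type]
  have hN1 : ∑ y : ∀ j, 𝒴 j, ∏ i, margSnd (pairMarg p i) (y i) = 1 := by
    rw [← Fintype.prod_sum]
    simp [sum_margSnd_pairMarg p hp1]
  have hq0 : ∀ y, 0 ≤ margSnd p y := fun y => Finset.sum_nonneg fun x _ => hp0 _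
  calc (0 : ℝ) = ∑ y : ∀ j, 𝒴 j, (margSnd p y - ∏ i, margSnd (pairMarg p i) (y i)) := by
        rw [Finset.sum_sub_distrib, hq1, hN1, sub_self]
    _ ≤ _ := by
        refine Finset.sum_le_sum fun y _ => ?_
        rcases (hq0 y).eq_or_lt with h | h
        · rw [← h]
          have : 0 ≤ ∏ i, margSnd (pairMarg p i) (y i) :=
            Finset.prod_nonneg fun i _ => (hq0 y).trans (margSnd_le_margSnd_pairMarg p hp0 i y)
          simpa using this
        · have hn : ∀ i, 0 < margSnd (pairMarg p i) (y i) := fun i =>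
            h.trans_le (margSnd_le_margSnd_pairMarg p hp0 i y)
          have hN : 0 < ∏ i, margSnd (pairMarg p i) (y i) := Finset.prod_pos fun i _ => hn i
          rw [← Real.log_prod fun i _ => (hn i).ne']
          set N := ∏ i, margSnd (pairMarg p i) (y i)
          -- `log t ≤ t - 1` at `t = N / q`
          have hl := Real.log_le_sub_one_of_pos (div_pos hN h)
          rw [Real.log_div hN.ne' h.ne'] at hl
          have hm := mul_le_mul_of_nonneg_left hl h.le
          have he : margSnd p y * (N / margSnd p y - 1) = N - margSnd p y := by
            field_simp
          rw [he] at hm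
          linarith

/-- If `Y_1, …, Y_k` are conditionally independent given `X` and
`H(X | Y_i) ≥ β̂_i` for each `i`, then
`H(X | Y_1, …, Y_k) ≥ Σ_i β̂_i − (k−1)·H(X)`. -/
theorem stmt12 (p : 𝒳 × (∀ i, 𝒴 i) → ℝ) (hp0 : ∀ z, 0 ≤ p z) (hp1 : ∑ z, p z = 1)
    (hci : CondIndepGiven p) (betaHat : Fin k → ℝ)
    (hβ : ∀ i, betaHat i ≤ condEntropy (pairMarg p i)) :
    (∑ i, betaHat i) - ((k : ℝ) - 1) * shannonEntropy (margFst p) ≤ condEntropy p := by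
  have hsum : ∑ i, betaHat i ≤ ∑ i, condEntropy (pairMarg p i) :=
    Finset.sum_le_sum fun i _ => hβ i
  have hX : shannonEntropy (margFst p) =
      ∑ x, ∑ y : ∀ j, 𝒴 j, p (x, y) * (-Real.log (margFst p x)) := by
    unfold shannonEntropy
    rw [← Finset.sum_neg_distrib]
    refine Finset.sum_congr rfl fun x _ => ?_
    rw [← Finset.sum_mul, mul_neg]
    rfl
  have hY : ∑ i, condEntropy (pairMarg p i) =
      ∑ x, ∑ y : ∀ j, 𝒴 j, p (x, y) * ∑ i, (Real.log (margSnd (pairMarg p i) (y i))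
        - Real.log (pairMarg p i (x, y i))) := by
    have h : ∀ i, condEntropy (pairMarg p i) = ∑ x, ∑ y : ∀ j, 𝒴 j, p (x, y) *
        (Real.log (margSnd (pairMarg p i) (y i)) - Real.log (pairMarg p i (x, y i))) := by
      intro i
      rw [condEntropy_eq_sum _ (pairMarg_nonneg p hp0 i)]
      exact Finset.sum_congr rfl fun x _ => sum_pairMarg_mul p i x
        (fun b => Real.log (margSnd (pairMarg p i) b) - Real.log (pairMarg p i (x, b)))
    simp only [h, Finset.mul_sum]
    rw [Finset.sum_comm]
    exact Finset.sum_congr rfl fun x _ => Finset.sum_comm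
  have key : condEntropy p + ((k : ℝ) - 1) * shannonEntropy (margFst p)
      - ∑ i, condEntropy (pairMarg p i) = ∑ y : ∀ j, 𝒴 j, margSnd p y *
      (Real.log (margSnd p y) - ∑ i, Real.log (margSnd (pairMarg p i) (y i))) := by
    rw [condEntropy_eq_sum p hp0, hX, hY]
    unfold margSnd
    simp only [Finset.sum_mul]
    rw [Finset.sum_comm (s := (Finset.univ : Finset (∀ j, 𝒴 j)))]
    simp only [Finset.mul_sum (s := (Finset.univ : Finset 𝒳)),
      Finset.mul_sum (s := (Finset.univ : Finset (∀ j, 𝒴 j)))]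
    simp only [← Finset.sum_add_distrib, ← Finset.sum_sub_distrib]
    refine Finset.sum_congr rfl fun x _ => Finset.sum_congr rfl fun y _ => ?_
    rcases (hp0 (x, y)).eq_or_lt with h | h
    · simp [← h]
    · have hπ : 0 < margFst p x :=
        h.trans_le (Finset.single_le_sum (f := fun y => p (x, y))
          (fun y _ => hp0 (x, y)) (Finset.mem_univ y))
      have hm : ∀ i, 0 < pairMarg p i (x, y i) := fun i => h.trans_le (le_pairMarg p hp0 i x y)
      have hlog : Real.log (p (x, y)) = Real.log (margFst p x)
          + (∑ i, Real.log (pairMarg p i (x, y i)) - k * Real.log (margFst p x)) := by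
        rw [hci x y hπ, Real.log_mul hπ.ne'
          (Finset.prod_pos fun i _ => div_pos (hm i) hπ).ne',
          Real.log_prod fun i _ => (div_pos (hm i) hπ).ne']
        simp [Real.log_div (hm _).ne' hπ.ne', Finset.sum_sub_distrib]
      rw [hlog, Finset.sum_sub_distrib]
      ring
  have hpos := relEntropy_prod_nonneg p hp0 hp1
  linarith
end
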